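/- arXiv:1009.2642 — 3 statements merged into one kernel-verified Lean document; each statement's English description precedes it below -/
import Mathlib

section
/- Let a_0, …, a_d and b_0, …, b_d be positive integers with a_0 + ⋯ + a_d = b_0 + ⋯ + b_d = n. Then the difference cycles (a_0 : ⋯ : a_d) and (b_0 : ⋯ : b_d) are equal as collections of subsets of ℤ/nℤ if and only if there exists an integer j such that b_i = a_{(i+j) mod (d+1)} for all 0 ≤ i ≤ d. -/
/-- The difference cycle `(a 0 : a 1 : ⋯ : a d)` of dimension `d` on `n` vertices:
the collection of subsets of `ℤ/nℤ` of the form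
`{i, i + a 0, i + a 0 + a 1, …, i + a 0 + ⋯ + a (d-1)}` for `i ∈ ℤ/nℤ`. -/
def diffCycle (n d : ℕ) (a : ℕ → ℕ) : Set (Finset (ZMod n)) :=
  {s | ∃ i : ZMod n, s = (Finset.range (d + 1)).image
      (fun t => i + ((∑ r ∈ Finset.range t, a r : ℕ) : ZMod n))}

/-!
Extend `a` periodically to all of `ℕ`, so that its partial sums modulo `n` walk round and round
through the vertices of a base set `S`, and the difference cycle is the orbit of `S` under
translation. Hence two difference cycles agree iff their base sets are translates of each other.
The step `a t` is the least `k > 0` such that `k` beyond the `t`-th vertex lies in `S`; so `S`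
together with one vertex determines all later steps, and a translation of base sets
forces a rotation of the step sequences.
-/

open Finset Function
open scoped Pointwise

lemma sum_range_add_mul_of_periodic {M : Type*} [AddCommMonoid M] {f : ℕ → M} {N : ℕ}
    (hf : Periodic f N) (t k : ℕ) :
    ∑ r ∈ range (t + k * N), f r = ∑ r ∈ range t, f r + k • ∑ r ∈ range N, f r := by
  have hshift (r : ℕ) : f (N + r) = f r := by rw [add_comm, hf]
  induction k with
  | zero => simp
  | succ k ih =>
    calc ∑ r ∈ range (t + (k + 1) * N), f r
        = ∑ r ∈ range N, f r + ∑ r ∈ range (t + k * N), f (N + r) := by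
          rw [← sum_range_add]
          ring_nf
      _ = ∑ r ∈ range t, f r + (k + 1) • ∑ r ∈ range N, f r := by
          simp only [hshift]
          rw [ih, succ_nsmul', add_left_comm]

lemma range_comp_add_left_of_periodic {α : Type*} {f : ℕ → α} {N : ℕ} (hf : Periodic f N)
    (hN : 0 < N) (j : ℕ) : Set.range (fun t ↦ f (j + t)) = Set.range f := by
  refine (Set.range_comp_subset_range (j + ·) f).antisymm ?_
  rintro _ ⟨t, rfl⟩
  obtain ⟨m, hm⟩ := Nat.exists_eq_add_of_le (Nat.le_mul_of_pos_right j hN)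
  refine ⟨m + t, ?_⟩
  rw [comp_apply, ← add_assoc, ← hm, add_comm]
  exact hf.nat_mul j t

lemma coe_image_range_of_periodic {α : Type*} [DecidableEq α] {f : ℕ → α} {N : ℕ}
    (hf : Periodic f N) (hN : 0 < N) : ((range N).image f : Set α) = Set.range f := by
  refine coe_image.trans_subset (Set.image_subset_range f _) |>.antisymm ?_
  rintro _ ⟨t, rfl⟩
  exact mem_image.2 ⟨t % N, mem_range.2 (t.mod_lt hN), hf.map_mod_nat t⟩

/-- The walk on `ℤ/nℤ` that starts at `0` and takes the steps `a 0, a 1, …`. Its first `d + 1`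
vertices form the base set of the difference cycle `(a 0 : ⋯ : a d)`. -/
def cyclicWalk (n : ℕ) (a : ℕ → ℕ) (t : ℕ) : ZMod n :=
  (∑ r ∈ range t, a r : ℕ)

section

variable {n d N : ℕ} {a b : ℕ → ℕ}

lemma cyclicWalk_zero : cyclicWalk n a 0 = 0 := by
  simp [cyclicWalk]

lemma cyclicWalk_add (s t : ℕ) :
    cyclicWalk n a (s + t) = cyclicWalk n a s + cyclicWalk n (fun r ↦ a (s + r)) t := by
  simp [cyclicWalk, sum_range_add]

lemma cyclicWalk_succ (t : ℕ) : cyclicWalk n a (t + 1) = cyclicWalk n a t + a t := by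
  simp [cyclicWalk, sum_range_succ]

lemma periodic_cyclicWalk (ha : Periodic a N) (hsum : ∑ r ∈ range N, a r = n) :
    Periodic (cyclicWalk n a) N := fun t ↦ by
  simpa [cyclicWalk, hsum] using
    congrArg (Nat.cast : ℕ → ZMod n) (sum_range_add_mul_of_periodic ha t 1)

lemma natCast_mem_range_cyclicWalk_iff (ha : Periodic a N) (hsum : ∑ r ∈ range N, a r = n)
    (m : ℕ) : (m : ZMod n) ∈ Set.range (cyclicWalk n a) ↔
      ∃ k s, ∑ r ∈ range s, a r = m + k * n := by
  constructor
  · rintro ⟨s, hs⟩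
    set p := ∑ r ∈ range s, a r with hp
    have hmod : p % n = m % n := (ZMod.natCast_eq_natCast_iff' _ _ _).1 hs
    refine ⟨p / n, s + m / n * N, ?_⟩
    rw [sum_range_add_mul_of_periodic ha, hsum, smul_eq_mul, ← hp]
    linarith [Nat.mod_add_div' p n, Nat.mod_add_div' m n]
  · rintro ⟨k, s, hs⟩
    exact ⟨s, by simp [cyclicWalk, hs]⟩

lemma isLeast_cyclicWalk_step (ha : Periodic a N) (hsum : ∑ r ∈ range N, a r = n) {t : ℕ}
    (hpos : 0 < a t) :
    IsLeast {k : ℕ | 0 < k ∧ cyclicWalk n a t + k ∈ Set.range (cyclicWalk n a)} (a t) := by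
  refine ⟨⟨hpos, t + 1, cyclicWalk_succ t⟩, ?_⟩
  rintro k ⟨hk, hmem⟩
  by_contra! hlt
  rw [cyclicWalk, ← Nat.cast_add, natCast_mem_range_cyclicWalk_iff ha hsum] at hmem
  obtain ⟨m, s, hs⟩ := hmem
  have hsum_t : ∑ r ∈ range (t + m * N), a r = ∑ r ∈ range t, a r + m * n := by
    rw [sum_range_add_mul_of_periodic ha, hsum, smul_eq_mul]
  have hstep : a (t + m * N) = a t := by simpa using ha.nat_mul m t
  have hmono : Monotone fun u ↦ ∑ r ∈ range u, a r :=
    monotone_nat_of_le_succ fun u ↦ by simp [sum_range_succ]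
  refine hmono.ne_of_lt_of_lt_nat (t + m * N) ?_ ?_ s hs
  · lia
  · rw [sum_range_succ, hsum_t, hstep]
    lia

lemma exists_range_cyclicWalk_eq_vadd_iff (hN : 0 < N) (ha : Periodic a N) (hb : Periodic b N)
    (hsa : ∑ r ∈ range N, a r = n) (hsb : ∑ r ∈ range N, b r = n)
    (hapos : ∀ i, 0 < a i) (hbpos : ∀ i, 0 < b i) :
    (∃ x : ZMod n, Set.range (cyclicWalk n a) = x +ᵥ Set.range (cyclicWalk n b)) ↔
      ∃ j, ∀ i, b i = a (j + i) := by
  constructor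
  · rintro ⟨x, hx⟩
    obtain ⟨j, hj⟩ : x ∈ Set.range (cyclicWalk n a) := by
      simpa [hx, cyclicWalk_zero] using
        Set.vadd_mem_vadd_set (a := x) (Set.mem_range_self (f := cyclicWalk n b) 0)
    have step_eq {i : ℕ} (hi : cyclicWalk n a (j + i) = x + cyclicWalk n b i) :
        b i = a (j + i) := by
      have hleast := isLeast_cyclicWalk_step ha hsa (hapos (j + i))
      simp only [hi, hx, ← vadd_eq_add x, vadd_add_assoc, Set.vadd_mem_vadd_set_iff] at hleast
      exact (isLeast_cyclicWalk_step hb hsb (hbpos i)).unique hleast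
    have vertex_eq (i : ℕ) : cyclicWalk n a (j + i) = x + cyclicWalk n b i := by
      induction i with
      | zero => simp [hj, cyclicWalk_zero]
      | succ i ih => rw [← add_assoc, cyclicWalk_succ, cyclicWalk_succ, step_eq ih, ih, add_assoc]
    exact ⟨j, fun i ↦ step_eq (vertex_eq i)⟩
  · rintro ⟨j, hj⟩
    obtain rfl : b = fun i ↦ a (j + i) := funext hj
    refine ⟨cyclicWalk n a j, ?_⟩
    rw [← range_comp_add_left_of_periodic (periodic_cyclicWalk ha hsa) hN j]
    simp only [cyclicWalk_add, ← vadd_eq_add (cyclicWalk n a j), Set.vadd_set_range]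

lemma diffCycle_eq_orbit (n d : ℕ) (a : ℕ → ℕ) :
    diffCycle n d a = AddAction.orbit (ZMod n) ((range (d + 1)).image (cyclicWalk n a)) := by
  ext s
  simp only [diffCycle, AddAction.mem_orbit_iff, Set.mem_ofPred_eq, vadd_finset_def, image_image,
    eq_comm (a := s)]
  rfl

lemma diffCycle_congr (h : ∀ i < d, a i = b i) : diffCycle n d a = diffCycle n d b := by
  have hwalk : ∀ t ∈ range (d + 1), cyclicWalk n a t = cyclicWalk n b t := fun t ht ↦
    congrArg Nat.cast <| sum_congr rfl fun r hr ↦ h r (by grind)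
  rw [diffCycle_eq_orbit, diffCycle_eq_orbit, image_congr hwalk]

lemma diffCycle_eq_iff_exists_shift_of_periodic (ha : Periodic a (d + 1)) (hb : Periodic b (d + 1))
    (hsa : ∑ r ∈ range (d + 1), a r = n) (hsb : ∑ r ∈ range (d + 1), b r = n)
    (hapos : ∀ i, 0 < a i) (hbpos : ∀ i, 0 < b i) :
    diffCycle n d a = diffCycle n d b ↔ ∃ j, ∀ i, b i = a (j + i) := by
  rw [← exists_range_cyclicWalk_eq_vadd_iff d.succ_pos ha hb hsa hsb hapos hbpos,
    diffCycle_eq_orbit, diffCycle_eq_orbit, AddAction.orbit_eq_iff, AddAction.mem_orbit_iff]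
  simp only [← coe_inj, coe_vadd_finset,
    coe_image_range_of_periodic (periodic_cyclicWalk ha hsa) d.succ_pos,
    coe_image_range_of_periodic (periodic_cyclicWalk hb hsb) d.succ_pos, eq_comm]

end

/-- Two difference cycles `(a 0 : ⋯ : a d)` and `(b 0 : ⋯ : b d)` of positive integers
with common sum `n` are equal as collections of subsets of `ℤ/nℤ` if and only if the
tuple `b` is a cyclic rotation of the tuple `a`. -/
theorem stmt_1 (n d : ℕ) (a b : ℕ → ℕ)
    (ha : ∀ i ≤ d, 0 < a i) (hb : ∀ i ≤ d, 0 < b i)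
    (hsa : ∑ i ∈ Finset.range (d + 1), a i = n)
    (hsb : ∑ i ∈ Finset.range (d + 1), b i = n) :
    diffCycle n d a = diffCycle n d b ↔
      ∃ j : ℕ, ∀ i ≤ d, b i = a ((i + j) % (d + 1)) := by
  have mod_le (i : ℕ) : i % (d + 1) ≤ d := Nat.lt_succ_iff.1 (i.mod_lt d.succ_pos)
  have mod_self {i : ℕ} (hi : i ≤ d) : i % (d + 1) = i := Nat.mod_eq_of_lt (by lia)
  have periodic_mod (c : ℕ → ℕ) : Periodic (fun i ↦ c (i % (d + 1))) (d + 1) := fun i ↦ by simp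
  have sum_mod (c : ℕ → ℕ) : ∑ i ∈ range (d + 1), c (i % (d + 1)) = ∑ i ∈ range (d + 1), c i :=
    sum_congr rfl fun i hi ↦ by rw [mod_self (mem_range_succ_iff.1 hi)]
  have diffCycle_mod (c : ℕ → ℕ) : diffCycle n d (fun i ↦ c (i % (d + 1))) = diffCycle n d c :=
    diffCycle_congr fun i hi ↦ by rw [mod_self hi.le]
  rw [← diffCycle_mod a, ← diffCycle_mod b, diffCycle_eq_iff_exists_shift_of_periodic
    (periodic_mod a) (periodic_mod b) ((sum_mod a).trans hsa) ((sum_mod b).trans hsb)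
    (fun i ↦ ha _ (mod_le i)) (fun i ↦ hb _ (mod_le i))]
  refine exists_congr fun j ↦ ⟨fun h i hi ↦ ?_, fun h i ↦ ?_⟩
  · rw [add_comm, ← h i, mod_self hi]
  · rw [h _ (mod_le i), Nat.mod_add_mod, add_comm]
end

section
/- Let k ≥ 3 with 3 | k and set l := k/3. Then the difference cycle (2k/3 : 2k/3 : 2k/3) on ℤ/2kℤ contains exactly 2k/3 distinct subsets, S_{k/3,2k} has exactly 8k/3 members and its Euler characteristic (vertices minus edges plus triangles) equals 2k/3; moreover the simple graph on ℤ/2kℤ whose edges are the 2-element subsets contained in some member of S_{k/3,2k} has exactly k/3 connected components, and the injective map ℤ/6ℤ → ℤ/2kℤ, j ↦ (k/3)·j, carries the union of the difference cycles (1 : 1 : 4) and (2 : 2 : 2) on ℤ/6ℤ (the boundary of the octahedron ∂β³) bijectively onto the set of members of S_{k/3,2k} contained in the connected component of 0. -/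
/-- The difference cycle `(a : b : c)` (with `c = n - a - b`) on `ℤ/nℤ`:
the collection of subsets of the form `{i, i + a, i + a + b}` for `i ∈ ℤ/nℤ`. -/
def dc (n a b : ℕ) : Set (Finset (ZMod n)) :=
  {s | ∃ i : ZMod n, s = {i, i + (a : ZMod n), i + (a : ZMod n) + (b : ZMod n)}}

/-- `S_{l,2k}`: the union of the difference cycles `(l : l : 2(k−l))` and
`(k−l : k−l : 2l)` on `ℤ/2kℤ`. -/
def Sln (k l : ℕ) : Set (Finset (ZMod (2 * k))) :=
  dc (2 * k) l l ∪ dc (2 * k) (k - l) (k - l)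

/-- The graph on `ℤ/nℤ` whose edges are the 2-element subsets contained in some
member of `S`. -/
def cGraph (n : ℕ) (S : Set (Finset (ZMod n))) : SimpleGraph (ZMod n) :=
  SimpleGraph.fromRel (fun v w => ∃ s ∈ S, v ∈ s ∧ w ∈ s)

/-!
Write `k = 3l`. The subgroup `lℤ/6lℤ` is a copy of `ℤ/6ℤ`, and its `l` cosets partition `ℤ/6lℤ`.
Both difference cycles of `S_{l,6l}` have all their steps in this subgroup, so `S_{l,6l}` consists
of one copy of `S_{1,6} = (1 : 1 : 4) ∪ (2 : 2 : 2) = ∂β³` on each coset: every count is `l` times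
the one for the octahedron, and the connected components are the cosets because the octahedron is
connected.
-/

section DisjointCopies

variable {ι α β : Type*} {S : Set (Finset α)}

theorem slice_injective (e : ι × α ≃ β) (i : ι) : Function.Injective fun a => e (i, a) :=
  e.injective.comp (Prod.mk_right_injective i)

variable [DecidableEq β]

/-- The disjoint union, over `i : ι`, of copies of the set system `S` on `α`, where the vertex `a`
of the `i`-th copy is named `e (i, a)`. -/
def disjointCopies (e : ι × α ≃ β) (S : Set (Finset α)) : Set (Finset β) :=
  Set.image2 (fun i t => t.image fun a => e (i, a)) Set.univ S

/-- The edges of a set system: the 2-element subsets contained in some member. -/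
def edgeFaces (S : Set (Finset α)) : Set (Finset α) :=
  {f | f.card = 2 ∧ ∃ s ∈ S, f ⊆ s}

theorem nonempty_of_mem_edgeFaces {f : Finset α} (hf : f ∈ edgeFaces S) : f.Nonempty :=
  Finset.card_pos.1 (by rw [hf.1]; exact two_pos)

theorem edgeFaces_coe [DecidableEq α] (T : Finset (Finset α)) :
    edgeFaces (T : Set (Finset α)) = (T.biUnion (Finset.powersetCard 2) : Finset (Finset α)) := by
  ext f
  simp only [edgeFaces, Set.mem_ofPred_eq, Finset.mem_coe, Finset.mem_biUnion,
    Finset.mem_powersetCard]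
  tauto

variable (e : ι × α ≃ β)

theorem image_mem_disjointCopies (i : ι) {t : Finset α} (ht : t ∈ S) :
    t.image (fun a => e (i, a)) ∈ disjointCopies e S :=
  Set.mem_image2_of_mem (Set.mem_univ i) ht

theorem disjointCopies_union (S T : Set (Finset α)) :
    disjointCopies e (S ∪ T) = disjointCopies e S ∪ disjointCopies e T :=
  Set.image2_union_right

theorem ncard_disjointCopies (hS : ∀ t ∈ S, t.Nonempty) :
    (disjointCopies e S).ncard = Nat.card ι * S.ncard := by
  have hinj : Set.InjOn (fun p : ι × Finset α => p.2.image fun a => e (p.1, a))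
      (Set.univ ×ˢ S) := by
    rintro ⟨i, t⟩ ⟨-, ht⟩ ⟨j, u⟩ - h
    dsimp only at h
    obtain ⟨a, ha⟩ := hS t ht
    obtain ⟨b, -, hb⟩ := Finset.mem_image.1 (h ▸ Finset.mem_image_of_mem (fun a => e (i, a)) ha)
    obtain ⟨rfl, -⟩ := Prod.ext_iff.1 (e.injective hb)
    rw [Finset.image_injective (slice_injective e j) h]
  rw [disjointCopies, ← Set.image_prod, hinj.ncard_image, Set.ncard_prod, Set.ncard_univ]

theorem edgeFaces_disjointCopies (S : Set (Finset α)) :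
    edgeFaces (disjointCopies e S) = disjointCopies e (edgeFaces S) := by
  ext f
  constructor
  · rintro ⟨hcard, _, ⟨i, -, t, ht, rfl⟩, hf⟩
    obtain ⟨u, hut, rfl⟩ := Finset.subset_image_iff.1 hf
    rw [Finset.card_image_of_injective _ (slice_injective e i)] at hcard
    exact image_mem_disjointCopies e i ⟨hcard, t, ht, mod_cast hut⟩
  · rintro ⟨i, -, u, ⟨hcard, t, ht, hut⟩, rfl⟩
    exact ⟨by rwa [Finset.card_image_of_injective _ (slice_injective e i)], _,
      image_mem_disjointCopies e i ht, Finset.image_subset_image hut⟩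

end DisjointCopies

section Graph

variable {n N : ℕ} {S : Set (Finset (ZMod n))}

theorem cGraph_adj {v w : ZMod n} :
    (cGraph n S).Adj v w ↔ v ≠ w ∧ ∃ s ∈ S, v ∈ s ∧ w ∈ s := by
  simp only [cGraph, SimpleGraph.fromRel_adj, and_comm (a := w ∈ _), or_self]

theorem cGraph_reachable_of_mem {s : Finset (ZMod n)} (hs : s ∈ S) {v w : ZMod n} (hv : v ∈ s)
    (hw : w ∈ s) : (cGraph n S).Reachable v w := by
  obtain rfl | hne := eq_or_ne v w
  · rfl
  · exact (cGraph_adj.2 ⟨hne, s, hs, hv, hw⟩).reachable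

theorem cGraph_connected_of_dc_one_subset {b : ℕ} (h : dc n 1 b ⊆ S) : (cGraph n S).Connected := by
  have step (i : ZMod n) : (cGraph n S).Reachable i (i + 1) :=
    cGraph_reachable_of_mem (h ⟨i, rfl⟩) (by simp) (by simp)
  have from_zero (v : ZMod n) : (cGraph n S).Reachable 0 v := by
    obtain ⟨z, rfl⟩ := ZMod.intCast_surjective v
    induction z using Int.induction_on with
    | zero => simp
    | succ i ih => simpa using ih.trans (step _)
    | pred i ih =>
      have step_back : (cGraph n S).Reachable (-i : ℤ) (-i - 1 : ℤ) := by
        simpa using (step (-i - 1)).symm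
      exact ih.trans step_back
  exact ⟨fun v w => (from_zero v).symm.trans (from_zero w)⟩

variable {ι : Type*} (e : ι × ZMod n ≃ ZMod N)

/-- The graph of `disjointCopies e S` is a disjoint union of copies of the graph of `S`, encoded as
the box product with an edgeless graph. -/
def cGraphDisjointCopiesIso :
    (⊥ : SimpleGraph ι).boxProd (cGraph n S) ≃g cGraph N (disjointCopies e S) where
  toEquiv := e
  map_rel_iff' := by
    rintro ⟨i, a⟩ ⟨j, b⟩
    simp only [SimpleGraph.boxProd_adj, SimpleGraph.bot_adj, false_and, false_or, cGraph_adj]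
    constructor
    · rintro ⟨hne, _, ⟨r, -, t, ht, rfl⟩, hi, hj⟩
      simp only [Finset.mem_image, EmbeddingLike.apply_eq_iff_eq, Prod.mk.injEq] at hi hj
      obtain ⟨a, ha, rfl, rfl⟩ := hi
      obtain ⟨b, hb, rfl, rfl⟩ := hj
      exact ⟨⟨fun hab => hne (by rw [hab]), t, ht, ha, hb⟩, rfl⟩
    · rintro ⟨⟨hne, t, ht, ha, hb⟩, rfl⟩
      exact ⟨(slice_injective e i).ne hne, _, image_mem_disjointCopies e i ht,
        Finset.mem_image_of_mem _ ha, Finset.mem_image_of_mem _ hb⟩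

theorem cGraph_disjointCopies_reachable_iff (hS : (cGraph n S).Connected) {p q : ι × ZMod n} :
    (cGraph N (disjointCopies e S)).Reachable (e p) (e q) ↔ p.1 = q.1 := by
  refine (cGraphDisjointCopiesIso e).reachable_iff.trans ?_
  rw [SimpleGraph.reachable_boxProd, SimpleGraph.reachable_bot]
  exact and_iff_left (hS.preconnected _ _)

theorem card_connectedComponent_cGraph_disjointCopies (hS : (cGraph n S).Connected) :
    Nat.card (cGraph N (disjointCopies e S)).ConnectedComponent = Nat.card ι := by
  refine (Nat.card_eq_of_bijective
    (fun i => (cGraph N (disjointCopies e S)).connectedComponentMk (e (i, 0))) ⟨?_, ?_⟩).symm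
  · intro i j h
    exact (cGraph_disjointCopies_reachable_iff e hS).1 (SimpleGraph.ConnectedComponent.exact h)
  · refine SimpleGraph.ConnectedComponent.ind fun v => ?_
    obtain ⟨p, rfl⟩ := e.surjective v
    exact ⟨p.1, SimpleGraph.ConnectedComponent.sound
      ((cGraph_disjointCopies_reachable_iff e hS).2 rfl)⟩

theorem bijOn_image_slice (hS : (cGraph n S).Connected) (hne : ∀ t ∈ S, t.Nonempty)
    (p : ι × ZMod n) :
    Set.BijOn (fun t : Finset (ZMod n) => t.image fun a => e (p.1, a)) S
      {s | s ∈ disjointCopies e S ∧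
        ∀ v ∈ s, (cGraph N (disjointCopies e S)).Reachable v (e p)} := by
  refine ⟨fun t ht => ⟨image_mem_disjointCopies e p.1 ht, ?_⟩,
    (Finset.image_injective (slice_injective e p.1)).injOn, ?_⟩
  · exact Finset.forall_mem_image.2 fun a _ => (cGraph_disjointCopies_reachable_iff e hS).2 rfl
  · rintro _ ⟨⟨i, -, t, ht, rfl⟩, hreach⟩
    obtain ⟨a, ha⟩ := hne t ht
    obtain rfl : i = p.1 := (cGraph_disjointCopies_reachable_iff e hS).1
      (hreach _ (Finset.mem_image_of_mem _ ha))
    exact ⟨t, ht, rfl⟩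

end Graph

section Dilation

variable {m n N : ℕ} (h : N = m * n)

/-- Multiplication by `m`, as a homomorphism `ℤ/nℤ → ℤ/mnℤ`. The modulus `N` is kept separate from
`m * n` so that the map applies to `ℤ/2kℤ` without a cast. -/
def dilation : ZMod n →+ ZMod N :=
  ZMod.lift n ⟨(AddMonoidHom.mulLeft (m : ZMod N)).comp (Int.castAddHom (ZMod N)), by
    simpa using (congrArg (Nat.cast : ℕ → ZMod N) h).symm⟩

theorem dilation_natCast (a : ℕ) : dilation h a = (m * a : ℕ) := by
  rw [dilation, ← Int.cast_natCast (R := ZMod n) a, ZMod.lift_coe]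
  simp

theorem dilation_eq_mul_val [NeZero n] (j : ZMod n) :
    dilation h j = (m : ZMod N) * (j.val : ZMod N) := by
  rw [← Nat.cast_mul, ← dilation_natCast h, ZMod.natCast_zmod_val]

variable [NeZero m] [NeZero n]

theorem bijective_add_dilation :
    Function.Bijective fun p : Fin m × ZMod n => ((p.1 : ℕ) : ZMod N) + dilation h p.2 := by
  have : NeZero N := ⟨h ▸ NeZero.ne (m * n)⟩
  refine (Fintype.bijective_iff_surjective_and_card _).2 ⟨fun v => ?_, by simp [ZMod.card, h]⟩
  refine ⟨(⟨v.val % m, Nat.mod_lt _ (NeZero.pos m)⟩, (v.val / m : ℕ)), ?_⟩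
  dsimp only
  rw [dilation_natCast, ← Nat.cast_add, Nat.mod_add_div, ZMod.natCast_zmod_val]

/-- The partition of `ℤ/mnℤ` into the `m` cosets of the copy `mℤ/mnℤ` of `ℤ/nℤ`. -/
noncomputable def cosetEquiv : Fin m × ZMod n ≃ ZMod N :=
  Equiv.ofBijective _ (bijective_add_dilation h)

theorem cosetEquiv_apply (r : Fin m) (j : ZMod n) :
    cosetEquiv h (r, j) = ((r : ℕ) : ZMod N) + dilation h j :=
  rfl

theorem cosetEquiv_zero_left (j : ZMod n) : cosetEquiv h (0, j) = dilation h j := by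
  simp [cosetEquiv_apply]

theorem cosetEquiv_add_natCast (r : Fin m) (j : ZMod n) (a : ℕ) :
    cosetEquiv h (r, j + a) = cosetEquiv h (r, j) + (m * a : ℕ) := by
  rw [cosetEquiv_apply, cosetEquiv_apply, map_add, dilation_natCast, add_assoc]

theorem dilation_injective : Function.Injective (dilation h : ZMod n → ZMod N) :=
  funext (cosetEquiv_zero_left h) ▸ slice_injective (cosetEquiv h) 0

theorem dc_mul (a b : ℕ) :
    dc N (m * a) (m * b) = disjointCopies (cosetEquiv h) (dc n a b) := by
  have image_triangle (r : Fin m) (j : ZMod n) :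
      ({j, j + (a : ZMod n), j + (a : ZMod n) + (b : ZMod n)} : Finset (ZMod n)).image
          (fun j => cosetEquiv h (r, j)) =
        {cosetEquiv h (r, j), cosetEquiv h (r, j) + (m * a : ℕ),
          cosetEquiv h (r, j) + (m * a : ℕ) + (m * b : ℕ)} := by
    simp only [Finset.image_insert, Finset.image_singleton, cosetEquiv_add_natCast]
  ext s
  constructor
  · rintro ⟨i, rfl⟩
    obtain ⟨⟨r, j⟩, rfl⟩ := (cosetEquiv h).surjective i
    exact image_triangle r j ▸ image_mem_disjointCopies _ r ⟨j, rfl⟩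
  · rintro ⟨r, -, _, ⟨j, rfl⟩, rfl⟩
    exact ⟨_, image_triangle r j⟩

end Dilation

theorem Sln_mul {m k l : ℕ} [NeZero m] [NeZero k] (h : 2 * (m * k) = m * (2 * k)) :
    Sln (m * k) (m * l) = disjointCopies (cosetEquiv h) (Sln k l) := by
  rw [Sln, Sln, ← Nat.mul_sub, disjointCopies_union, dc_mul h, dc_mul h]

section Octahedron

theorem nonempty_of_mem_dc {n a b : ℕ} {s : Finset (ZMod n)} (hs : s ∈ dc n a b) : s.Nonempty := by
  obtain ⟨i, rfl⟩ := hs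
  exact Finset.insert_nonempty _ _

theorem dc_eq_coe_image (n a b : ℕ) [NeZero n] :
    dc n a b = (Finset.univ.image fun i : ZMod n =>
      ({i, i + (a : ZMod n), i + (a : ZMod n) + (b : ZMod n)} : Finset (ZMod n)) :
        Finset (Finset (ZMod n))) := by
  ext s
  simp [dc, eq_comm]

/-- The boundary `∂β³` of the octahedron, with antipodal pairs `{j, j + 3}`: its triangles are the
sets containing exactly one vertex of each pair. -/
def octahedronBoundary : Set (Finset (ZMod 6)) :=
  dc 6 1 1 ∪ dc 6 2 2

theorem octahedronBoundary_connected : (cGraph 6 octahedronBoundary).Connected :=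
  cGraph_connected_of_dc_one_subset Set.subset_union_left

theorem nonempty_of_mem_octahedronBoundary {s : Finset (ZMod 6)} (hs : s ∈ octahedronBoundary) :
    s.Nonempty :=
  hs.elim nonempty_of_mem_dc nonempty_of_mem_dc

theorem ncard_dc_six_two_two : (dc 6 2 2).ncard = 2 := by
  rw [dc_eq_coe_image, Set.ncard_coe_finset]
  decide

theorem ncard_octahedronBoundary : octahedronBoundary.ncard = 8 := by
  rw [octahedronBoundary, dc_eq_coe_image, dc_eq_coe_image, ← Finset.coe_union,
    Set.ncard_coe_finset]
  decide

theorem ncard_edgeFaces_octahedronBoundary : (edgeFaces octahedronBoundary).ncard = 12 := by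
  rw [octahedronBoundary, dc_eq_coe_image, dc_eq_coe_image, ← Finset.coe_union, edgeFaces_coe,
    Set.ncard_coe_finset]
  decide

variable {l N : ℕ} [NeZero l]

theorem ncard_dc_mul_two (h : N = l * 6) : (dc N (l * 2) (l * 2)).ncard = l * 2 := by
  rw [dc_mul h, ncard_disjointCopies _ fun _ => nonempty_of_mem_dc, ncard_dc_six_two_two,
    Nat.card_fin]

theorem Sln_mul_three (h : 2 * (l * 3) = l * 6) :
    Sln (l * 3) l = disjointCopies (cosetEquiv h) octahedronBoundary := by
  have := Sln_mul (k := 3) (l := 1) h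
  rwa [mul_one] at this

theorem ncard_Sln_mul_three : (Sln (l * 3) l).ncard = l * 8 := by
  rw [Sln_mul_three (by ring), ncard_disjointCopies _ fun _ => nonempty_of_mem_octahedronBoundary,
    ncard_octahedronBoundary, Nat.card_fin]

theorem ncard_edgeFaces_Sln_mul_three : (edgeFaces (Sln (l * 3) l)).ncard = l * 12 := by
  rw [Sln_mul_three (by ring), edgeFaces_disjointCopies,
    ncard_disjointCopies _ fun _ => nonempty_of_mem_edgeFaces,
    ncard_edgeFaces_octahedronBoundary, Nat.card_fin]

theorem card_connectedComponent_Sln_mul_three :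
    Nat.card (cGraph (2 * (l * 3)) (Sln (l * 3) l)).ConnectedComponent = l := by
  rw [Sln_mul_three (by ring),
    card_connectedComponent_cGraph_disjointCopies _ octahedronBoundary_connected, Nat.card_fin]

theorem bijOn_image_dilation_octahedronBoundary (h : 2 * (l * 3) = l * 6) :
    Set.BijOn (fun t : Finset (ZMod 6) => t.image (dilation h)) octahedronBoundary
      {s | s ∈ Sln (l * 3) l ∧
        ∀ v ∈ s, (cGraph (2 * (l * 3)) (Sln (l * 3) l)).Reachable v 0} := by
  have hbij := bijOn_image_slice (cosetEquiv h) octahedronBoundary_connected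
    (fun _ => nonempty_of_mem_octahedronBoundary) (0, 0)
  simpa only [cosetEquiv_zero_left, map_zero, ← Sln_mul_three] using hbij

end Octahedron

/-- For `3 ∣ k`: the difference cycle `(2k/3 : 2k/3 : 2k/3)` has length `2k/3`,
`S_{k/3,2k}` has `8k/3` triangles and Euler characteristic `2k/3`; it has `k/3`
connected components and the injective map `ℤ/6ℤ → ℤ/2kℤ`, `j ↦ (k/3)·j`, carries the
boundary of the octahedron `∂β³ = (1 : 1 : 4) ∪ (2 : 2 : 2)` bijectively onto the set
of triangles of `S_{k/3,2k}` in the connected component of `0`. -/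
theorem stmt_11 (k : ℕ) (hk : 3 ≤ k) (h3 : 3 ∣ k) :
    (dc (2 * k) (2 * k / 3) (2 * k / 3)).ncard = 2 * k / 3 ∧
    (Sln k (k / 3)).ncard = 8 * k / 3 ∧
    (2 * k : ℤ) -
      ({e : Finset (ZMod (2 * k)) | e.card = 2 ∧ ∃ s ∈ Sln k (k / 3), e ⊆ s}.ncard : ℤ)
      + ((Sln k (k / 3)).ncard : ℤ) = ((2 * k / 3 : ℕ) : ℤ) ∧
    Nat.card (cGraph (2 * k) (Sln k (k / 3))).ConnectedComponent = k / 3 ∧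
    Function.Injective
      (fun j : ZMod 6 => ((k / 3 : ℕ) : ZMod (2 * k)) * (j.val : ZMod (2 * k))) ∧
    Set.BijOn
      (fun s : Finset (ZMod 6) =>
        s.image (fun j => ((k / 3 : ℕ) : ZMod (2 * k)) * (j.val : ZMod (2 * k))))
      (dc 6 1 1 ∪ dc 6 2 2)
      {s | s ∈ Sln k (k / 3) ∧
        ∀ v ∈ s, (cGraph (2 * k) (Sln k (k / 3))).Reachable v 0} := by
  obtain ⟨l, rfl⟩ := exists_eq_mul_left_of_dvd h3
  have : NeZero l := ⟨by omega⟩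
  have hN : 2 * (l * 3) = l * 6 := by ring
  have two_thirds : 2 * (l * 3) / 3 = l * 2 := by omega
  have eight_thirds : 8 * (l * 3) / 3 = l * 8 := by omega
  have edges : {e : Finset (ZMod (2 * (l * 3))) |
      e.card = 2 ∧ ∃ s ∈ Sln (l * 3) l, e ⊆ s}.ncard = l * 12 := ncard_edgeFaces_Sln_mul_three
  have mul_val_eq_dilation : (fun j : ZMod 6 =>
      (l : ZMod (2 * (l * 3))) * (j.val : ZMod (2 * (l * 3)))) = dilation hN :=
    funext fun j => (dilation_eq_mul_val hN j).symm
  rw [two_thirds, eight_thirds, Nat.mul_div_cancel l three_pos, edges, ncard_Sln_mul_three,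
    mul_val_eq_dilation]
  refine ⟨ncard_dc_mul_two hN, rfl, ?_, card_connectedComponent_Sln_mul_three,
    dilation_injective hN, bijOn_image_dilation_octahedronBoundary hN⟩
  push_cast
  ring
end

section
/- Let k ≥ 3, let l be an integer with 1 ≤ l ≤ ⌊(k−1)/2⌋ and 3l ≠ k, and set n := gcd(l, k). Then S_{l,2k} has exactly n connected components, each with 2k/n vertices, and there exists λ ∈ {l, k−l} such that the map ℤ/(2k/n)ℤ → ℤ/2kℤ, j ↦ λ·j, is injective and carries the complex A₆(2k/n), defined as the union of the difference cycles (1 : 1 : 2k/n − 2) and (2 : k/n − 1 : k/n − 1) on ℤ/(2k/n)ℤ, bijectively onto the set of members of S_{l,2k} contained in the connected component of 0; in particular S_{l,2k} is isomorphic to n disjoint copies of A₆(2k/n). -/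
/-- Lutz's series: `A₆(n) = (1 : 1 : n−2) ∪ (2 : n/2−1 : n/2−1)` on `ℤ/nℤ`
(for even `n`, i.e. `n = 2k/m`, the second cycle is `(2 : k/m−1 : k/m−1)`). -/
def A6 (n : ℕ) : Set (Finset (ZMod n)) := dc n 1 1 ∪ dc n 2 (n / 2 - 1)

/-!
Write `n = gcd(l, k)`. Since `l / n` and `k / n` are coprime, they are not both even, so one of
`l / n` and `(k - l) / n` is odd; let `λ ∈ {l, k - l}` be the corresponding multiple of `n`.
Exchanging `l` and `k - l` does not change `S_{l,2k}`, so we may take `λ = l`. As `l / n` is odd,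
`l` has order `2k/n` in `ℤ/2kℤ` and `l * (k / n) = k`, so that `k - l` is a multiple of `l`.
Hence the components are the cosets of `⟨l⟩`, and the embedding `1 ↦ l` of `ℤ/(2k/n)ℤ` sends
`2 ↦ 2l` and `k/n - 1 ↦ k - l`: it takes `(1 : 1 : 2k/n - 2)` to `(l : l : 2(k - l))` and
`(2 : k/n - 1 : k/n - 1)` to `(2l : k - l : k - l)`, a rotation of `(k - l : k - l : 2l)`.
-/

open AddSubgroup

section CosetGraph

variable {A : Type*} [AddGroup A] {G : SimpleGraph A} {H : AddSubgroup A}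

theorem reachable_add_of_mem_closure {D : Set A} (hD : ∀ d ∈ D, ∀ v, G.Reachable v (v + d))
    {x : A} (hx : x ∈ closure D) (v : A) : G.Reachable v (v + x) := by
  induction hx using closure_induction generalizing v with
  | mem d hd => exact hD d hd v
  | zero => rw [add_zero]
  | add x y _ _ ihx ihy => simpa only [add_assoc] using (ihx v).trans (ihy (v + x))
  | neg x _ ih => simpa only [neg_add_cancel_right] using (ih (v + -x)).symm

theorem card_connectedComponent_eq_index (hG : ∀ v w, G.Reachable v w ↔ v - w ∈ H) :
    Nat.card G.ConnectedComponent = H.index := by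
  have e : G.ConnectedComponent ≃ Quotient (QuotientAddGroup.rightRel H) :=
    Quot.congr (Equiv.refl A) fun v w => by
      rw [hG, ← neg_mem_iff, neg_sub, sub_eq_add_neg]
      exact QuotientAddGroup.rightRel_apply.symm
  exact Nat.card_congr (e.trans (QuotientAddGroup.quotientRightRelEquivQuotientLeftRel H))

theorem card_fiber_connectedComponentMk (hG : ∀ v w, G.Reachable v w ↔ v - w ∈ H)
    (c : G.ConnectedComponent) : Nat.card {v // G.connectedComponentMk v = c} = Nat.card H := by
  induction c using SimpleGraph.ConnectedComponent.ind with
  | h a =>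
    refine Nat.card_congr ((Equiv.subRight a).subtypeEquiv fun v => ?_)
    rw [SimpleGraph.ConnectedComponent.eq, hG, Equiv.subRight_apply]

end CosetGraph

section ZModEmbedding

variable {A : Type*} [AddGroup A] {a : A} {M : ℕ}

/-- The embedding `j ↦ j • a` of `ℤ/Mℤ` into an additive group with an element `a` of order `M`. -/
def zmodEmbedding (ha : addOrderOf a = M) : ZMod M →+ A :=
  ZMod.lift M ⟨zmultiplesHom A a, by simp [← ha, addOrderOf_nsmul_eq_zero]⟩

variable (ha : addOrderOf a = M)

theorem zmodEmbedding_natCast (j : ℕ) : zmodEmbedding ha (j : ZMod M) = j • a := by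
  rw [← Int.cast_natCast, zmodEmbedding, ZMod.lift_coe, zmultiplesHom_apply, natCast_zsmul]

theorem zmodEmbedding_apply [NeZero M] (j : ZMod M) : zmodEmbedding ha j = j.val • a := by
  rw [← zmodEmbedding_natCast ha, ZMod.natCast_zmod_val]

theorem zmodEmbedding_injective : Function.Injective (zmodEmbedding ha) := by
  refine (ZMod.lift_injective M).2 fun m hm => ?_
  rwa [ZMod.intCast_zmod_eq_zero_iff_dvd, ← ha, addOrderOf_dvd_iff_zsmul_eq_zero]

theorem range_zmodEmbedding : (zmodEmbedding ha).range = zmultiples a := by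
  ext x
  simp only [AddMonoidHom.mem_range, ZMod.intCast_surjective.exists, zmodEmbedding, ZMod.lift_coe,
    zmultiplesHom_apply, mem_zmultiples_iff]

end ZModEmbedding

theorem zmodEmbedding_eq_natCast_mul_val {N M a : ℕ} [NeZero N]
    (ha : addOrderOf (a : ZMod N) = M) :
    zmodEmbedding ha = fun j : ZMod M => (a : ZMod N) * (j.val : ZMod N) := by
  have : NeZero M := ⟨ha ▸ (addOrderOf_pos _).ne'⟩
  ext j
  rw [zmodEmbedding_apply, nsmul_eq_mul, mul_comm]

section DifferenceCycle

variable {M N : ℕ}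

theorem dc_rotate {a b c : ℕ} (h : a + b + c = N) : dc N a b = dc N b c := by
  have hsum : (a : ZMod N) + b + c = 0 := by
    rw [← Nat.cast_add, ← Nat.cast_add, h, ZMod.natCast_self]
  ext s
  constructor
  · rintro ⟨i, rfl⟩
    refine ⟨i + a, ?_⟩
    rw [show i + a + b + c = i by linear_combination hsum]
    grind
  · rintro ⟨i, rfl⟩
    refine ⟨i + b + c, ?_⟩
    rw [show i + b + c + a = i by linear_combination hsum]
    grind

theorem sub_mem_of_mem_dc {H : AddSubgroup (ZMod N)} {a b : ℕ} (ha : (a : ZMod N) ∈ H)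
    (hb : (b : ZMod N) ∈ H) {s : Finset (ZMod N)} (hs : s ∈ dc N a b) {v w : ZMod N}
    (hv : v ∈ s) (hw : w ∈ s) : v - w ∈ H := by
  obtain ⟨i, rfl⟩ := hs
  have sub_base_mem : ∀ u ∈ ({i, i + (a : ZMod N), i + a + b} : Finset (ZMod N)), u - i ∈ H := by
    simp [add_assoc, ha, add_mem ha hb]
  simpa only [sub_sub_sub_cancel_right] using
    sub_mem (sub_base_mem v hv) (sub_base_mem w hw)

theorem image_translate_dc (g : ZMod M →+ ZMod N) {a b a' b' : ℕ} (ha : g a = a')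
    (hb : g b = b') (x : ZMod N) :
    (fun s : Finset (ZMod M) => s.image fun j => x + g j) '' dc M a b =
      {s | s ∈ dc N a' b' ∧ ∀ v ∈ s, v - x ∈ g.range} := by
  have image_triangle (i : ZMod M) :
      Finset.image (fun j => x + g j) {i, i + (a : ZMod M), i + a + b} =
        {x + g i, x + g i + a', x + g i + a' + b'} := by
    simp only [Finset.image_insert, Finset.image_singleton, map_add, ha, hb, add_assoc]
  ext s
  constructor
  · rintro ⟨_, ⟨i, rfl⟩, rfl⟩
    refine ⟨⟨x + g i, image_triangle i⟩, fun v hv => ?_⟩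
    obtain ⟨j, -, rfl⟩ := Finset.mem_image.1 hv
    exact ⟨j, (add_sub_cancel_left x (g j)).symm⟩
  · rintro ⟨⟨i, rfl⟩, hrange⟩
    obtain ⟨j, hj⟩ := hrange i (Finset.mem_insert_self _ _)
    refine ⟨_, ⟨j, rfl⟩, ?_⟩
    simp only [image_triangle, hj, add_sub_cancel]

end DifferenceCycle

section ComponentGraph

variable {N : ℕ} {S : Set (Finset (ZMod N))}

theorem reachable_cGraph_of_mem {s : Finset (ZMod N)} (hs : s ∈ S) {v w : ZMod N}
    (hv : v ∈ s) (hw : w ∈ s) : (cGraph N S).Reachable v w := by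
  by_cases hvw : v = w
  · exact hvw ▸ .rfl
  · exact SimpleGraph.Adj.reachable
      ((SimpleGraph.fromRel_adj _ _ _).2 ⟨hvw, .inl ⟨s, hs, hv, hw⟩⟩)

theorem sub_mem_of_reachable_cGraph {H : AddSubgroup (ZMod N)}
    (hS : ∀ s ∈ S, ∀ v ∈ s, ∀ w ∈ s, v - w ∈ H) {v w : ZMod N}
    (h : (cGraph N S).Reachable v w) : v - w ∈ H := by
  obtain ⟨p⟩ := h
  induction p with
  | nil => simp
  | cons hadj _ ih =>
    rw [← sub_add_sub_cancel]
    refine add_mem ?_ ih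
    obtain ⟨-, ⟨s, hs, hv, hw⟩ | ⟨s, hs, hw, hv⟩⟩ := (SimpleGraph.fromRel_adj _ _ _).1 hadj
    all_goals exact hS s hs _ hv _ hw

end ComponentGraph

theorem index_zmultiples_natCast (N a : ℕ) : (zmultiples (a : ZMod N)).index = N.gcd a := by
  obtain rfl | hN := N.eq_zero_or_pos
  · exact (Int.index_zmultiples a).trans (Nat.gcd_zero_left a).symm
  have hcard := (zmultiples (a : ZMod N)).card_mul_index
  rw [Nat.card_zmultiples, ZMod.addOrderOf_coe a hN.ne', Nat.card_zmod] at hcard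
  exact Nat.eq_of_mul_eq_mul_left (Nat.div_gcd_pos_of_pos_left a hN)
    (hcard.trans (Nat.div_mul_cancel (Nat.gcd_dvd_left N a)).symm)

section OddQuotient

variable {k l : ℕ}

theorem pos_of_odd_div_gcd (hodd : Odd (l / l.gcd k)) : 0 < l :=
  Nat.pos_of_ne_zero fun h => by simp [h] at hodd

theorem gcd_two_mul_of_odd_div_gcd (hodd : Odd (l / l.gcd k)) : (2 * k).gcd l = l.gcd k := by
  have hpos : 0 < l.gcd k := Nat.gcd_pos_of_pos_left k (pos_of_odd_div_gcd hodd)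
  have hcop : (2 * (k / l.gcd k)).Coprime (l / l.gcd k) :=
    (Nat.coprime_two_left.2 hodd).mul_left (Nat.coprime_div_gcd_div_gcd hpos).symm
  calc
    (2 * k).gcd l = (2 * (k / l.gcd k) * l.gcd k).gcd (l / l.gcd k * l.gcd k) := by
      rw [mul_assoc, Nat.div_mul_cancel (Nat.gcd_dvd_right l k),
        Nat.div_mul_cancel (Nat.gcd_dvd_left l k)]
    _ = l.gcd k := by rw [Nat.gcd_mul_right, hcop.gcd_eq_one, one_mul]

theorem addOrderOf_natCast_of_odd_div_gcd (hodd : Odd (l / l.gcd k)) :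
    addOrderOf (l : ZMod (2 * k)) = 2 * k / l.gcd k := by
  rw [ZMod.addOrderOf_coe' _ (pos_of_odd_div_gcd hodd).ne', gcd_two_mul_of_odd_div_gcd hodd]

theorem div_gcd_nsmul_natCast (hodd : Odd (l / l.gcd k)) :
    (k / l.gcd k) • (l : ZMod (2 * k)) = k := by
  obtain ⟨t, ht⟩ := hodd
  have hmul : k / l.gcd k * l = 2 * k * t + k := by
    rw [Nat.div_mul_right_comm (Nat.gcd_dvd_right l k), Nat.mul_div_assoc _ (Nat.gcd_dvd_left l k),
      ht]
    ring
  rw [nsmul_eq_mul, ← Nat.cast_mul, hmul, Nat.cast_add, Nat.cast_mul (2 * k), ZMod.natCast_self,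
    zero_mul, zero_add]

theorem natCast_sub_mem_zmultiples (hlk : l ≤ k) (hodd : Odd (l / l.gcd k)) :
    ((k - l : ℕ) : ZMod (2 * k)) ∈ zmultiples (l : ZMod (2 * k)) := by
  have hk_mem := nsmul_mem (mem_zmultiples (l : ZMod (2 * k))) (k / l.gcd k)
  rw [div_gcd_nsmul_natCast hodd] at hk_mem
  rw [Nat.cast_sub hlk]
  exact sub_mem hk_mem (mem_zmultiples _)

theorem odd_div_gcd_or_odd_sub_div_gcd (hk : 0 < k) (hlk : l ≤ k) :
    Odd (l / l.gcd k) ∨ Odd ((k - l) / l.gcd k) := by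
  have hpos : 0 < l.gcd k := Nat.gcd_pos_of_pos_right l hk
  have hsub : (k - l) / l.gcd k = k / l.gcd k - l / l.gcd k := by
    refine Nat.div_eq_of_eq_mul_left hpos ?_
    rw [Nat.sub_mul, Nat.div_mul_cancel (Nat.gcd_dvd_right l k),
      Nat.div_mul_cancel (Nat.gcd_dvd_left l k)]
  rw [hsub, ← Nat.not_even_iff_odd, ← imp_iff_not_or]
  intro heven
  have hodd : Odd (k / l.gcd k) := Nat.coprime_two_left.1
    ((Nat.coprime_div_gcd_div_gcd hpos).coprime_dvd_left heven.two_dvd)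
  exact Nat.Odd.sub_even (Nat.div_le_div_right hlk) hodd heven

end OddQuotient

section Sln

variable {k l : ℕ}

theorem Sln_sub (hlk : l ≤ k) : Sln k (k - l) = Sln k l := by
  rw [Sln, Sln, Nat.sub_sub_self hlk, Set.union_comm]

theorem exists_Sln_eq_odd_div_gcd (hk : 0 < k) (hlk : l ≤ k) :
    ∃ lam ∈ ({l, k - l} : Set ℕ), lam ≤ k ∧ Sln k lam = Sln k l ∧ lam.gcd k = l.gcd k ∧
      Odd (lam / lam.gcd k) := by
  have hgcd : (k - l).gcd k = l.gcd k := Nat.gcd_self_sub_left hlk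
  rcases odd_div_gcd_or_odd_sub_div_gcd hk hlk with hodd | hodd
  · exact ⟨l, .inl rfl, hlk, rfl, rfl, hodd⟩
  · exact ⟨k - l, .inr rfl, Nat.sub_le k l, Sln_sub hlk, hgcd, hgcd.symm ▸ hodd⟩

theorem reachable_cGraph_Sln_iff (hlk : l ≤ k) (hodd : Odd (l / l.gcd k)) (v w : ZMod (2 * k)) :
    (cGraph (2 * k) (Sln k l)).Reachable v w ↔ v - w ∈ zmultiples (l : ZMod (2 * k)) := by
  have hl := mem_zmultiples (l : ZMod (2 * k))
  have hkl := natCast_sub_mem_zmultiples hlk hodd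
  constructor
  · refine sub_mem_of_reachable_cGraph ?_
    rintro s (hs | hs) v hv w hw
    · exact sub_mem_of_mem_dc hl hl hs hv hw
    · exact sub_mem_of_mem_dc hkl hkl hs hv hw
  · intro h
    have hstep : ∀ d ∈ ({(l : ZMod (2 * k))} : Set _), ∀ u,
        (cGraph (2 * k) (Sln k l)).Reachable u (u + d) := by
      rintro _ rfl u
      exact reachable_cGraph_of_mem (.inl ⟨u, rfl⟩) (by simp) (by simp)
    rw [zmultiples_eq_closure] at h
    simpa only [add_sub_cancel] using (reachable_add_of_mem_closure hstep h w).symm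

theorem image_image_A6 (hlk : l ≤ k) (hodd : Odd (l / l.gcd k)) (x : ZMod (2 * k)) :
    (fun s : Finset (ZMod (2 * k / l.gcd k)) =>
        s.image fun j => x + zmodEmbedding (addOrderOf_natCast_of_odd_div_gcd hodd) j) ''
        A6 (2 * k / l.gcd k) =
      {s | s ∈ Sln k l ∧ ∀ v ∈ s, v - x ∈ zmultiples (l : ZMod (2 * k))} := by
  have hord := addOrderOf_natCast_of_odd_div_gcd hodd
  have map_one : zmodEmbedding hord (1 : ℕ) = (l : ℕ) := by
    rw [zmodEmbedding_natCast, one_nsmul]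
  have map_two : zmodEmbedding hord (2 : ℕ) = (2 * l : ℕ) := by
    rw [zmodEmbedding_natCast, nsmul_eq_mul, Nat.cast_mul]
  have map_half : zmodEmbedding hord (2 * k / l.gcd k / 2 - 1 : ℕ) = (k - l : ℕ) := by
    have hpos : 1 ≤ k / l.gcd k :=
      Nat.div_gcd_pos_of_pos_right l ((pos_of_odd_div_gcd hodd).trans_le hlk)
    rw [zmodEmbedding_natCast, Nat.mul_div_assoc 2 (Nat.gcd_dvd_right l k),
      Nat.mul_div_cancel_left _ two_pos, sub_nsmul _ hpos, div_gcd_nsmul_natCast hodd, one_nsmul,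
      Nat.cast_sub hlk, sub_eq_add_neg]
  have hrotate : dc (2 * k) (2 * l) (k - l) = dc (2 * k) (k - l) (k - l) := dc_rotate (by lia)
  unfold A6
  rw [Set.image_union, image_translate_dc _ map_one map_one,
    image_translate_dc _ map_two map_half, range_zmodEmbedding, hrotate, ← Set.sep_union]
  rfl

theorem bijOn_A6_Sln (hlk : l ≤ k) (hodd : Odd (l / l.gcd k)) (x : ZMod (2 * k)) :
    Set.BijOn (fun s : Finset (ZMod (2 * k / l.gcd k)) =>
        s.image fun j => x + zmodEmbedding (addOrderOf_natCast_of_odd_div_gcd hodd) j)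
      (A6 (2 * k / l.gcd k))
      {s | s ∈ Sln k l ∧ ∀ v ∈ s, v - x ∈ zmultiples (l : ZMod (2 * k))} := by
  have hinj := (add_right_injective x).comp
    (zmodEmbedding_injective (addOrderOf_natCast_of_odd_div_gcd hodd))
  exact image_image_A6 hlk hodd x ▸ (Finset.image_injective hinj).injOn.bijOn_image

end Sln

theorem stmt_12_general (k l n : ℕ) (hk : 0 < k) (hlk : l ≤ k) (hn : n = Nat.gcd l k) :
    Nat.card (cGraph (2 * k) (Sln k l)).ConnectedComponent = n ∧
    (∀ c : (cGraph (2 * k) (Sln k l)).ConnectedComponent,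
      Nat.card {v : ZMod (2 * k) //
        (cGraph (2 * k) (Sln k l)).connectedComponentMk v = c} = 2 * k / n) ∧
    (∃ lam ∈ ({l, k - l} : Set ℕ),
      Function.Injective
        (fun j : ZMod (2 * k / n) => (lam : ZMod (2 * k)) * (j.val : ZMod (2 * k))) ∧
      Set.BijOn
        (fun s : Finset (ZMod (2 * k / n)) =>
          s.image (fun j => (lam : ZMod (2 * k)) * (j.val : ZMod (2 * k))))
        (A6 (2 * k / n))
        {s | s ∈ Sln k l ∧ ∀ v ∈ s, (cGraph (2 * k) (Sln k l)).Reachable v 0}) ∧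
    (∀ c : (cGraph (2 * k) (Sln k l)).ConnectedComponent,
      ∃ f : ZMod (2 * k / n) → ZMod (2 * k), Function.Injective f ∧
        Set.BijOn (fun s : Finset (ZMod (2 * k / n)) => s.image f)
          (A6 (2 * k / n))
          {s | s ∈ Sln k l ∧
            ∀ v ∈ s, (cGraph (2 * k) (Sln k l)).connectedComponentMk v = c}) := by
  obtain ⟨lam, hlam, hle, hS, hgcd, hodd⟩ := exists_Sln_eq_odd_div_gcd hk hlk
  rw [hn, ← hS, ← hgcd]
  have hreach := reachable_cGraph_Sln_iff hle hodd
  have hord := addOrderOf_natCast_of_odd_div_gcd hodd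
  have hbij := bijOn_A6_Sln hle hodd
  have : NeZero (2 * k) := ⟨by lia⟩
  have hval := zmodEmbedding_eq_natCast_mul_val hord
  refine ⟨?_, fun c => ?_, ⟨lam, hlam, ?_, ?_⟩, fun c => ?_⟩
  · rw [card_connectedComponent_eq_index hreach, index_zmultiples_natCast,
      gcd_two_mul_of_odd_div_gcd hodd]
  · rw [card_fiber_connectedComponentMk hreach, Nat.card_zmultiples, hord]
  · exact hval ▸ zmodEmbedding_injective hord
  · simpa only [← hval, hreach, sub_zero, zero_add] using hbij 0
  · induction c using SimpleGraph.ConnectedComponent.ind with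
    | h a =>
      simp only [SimpleGraph.ConnectedComponent.eq, hreach]
      exact ⟨_, (add_right_injective a).comp (zmodEmbedding_injective hord), hbij a⟩

/-- For `k ≥ 3`, `1 ≤ l ≤ ⌊(k−1)/2⌋`, `3l ≠ k` and `n = gcd(l, k)`: `S_{l,2k}` has
exactly `n` connected components with `2k/n` vertices each; for some `λ ∈ {l, k−l}`
the injective map `j ↦ λ·j` carries `A₆(2k/n)` bijectively onto the triangles of the
component of `0`; and every component is an injective image of `A₆(2k/n)`, so
`S_{l,2k}` is isomorphic to `n` disjoint copies of `A₆(2k/n)`. -/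
theorem stmt_12 (k l n : ℕ) (hk : 3 ≤ k) (hl : 1 ≤ l) (hl2 : l ≤ (k - 1) / 2)
    (h3 : 3 * l ≠ k) (hn : n = Nat.gcd l k) :
    Nat.card (cGraph (2 * k) (Sln k l)).ConnectedComponent = n ∧
    (∀ c : (cGraph (2 * k) (Sln k l)).ConnectedComponent,
      Nat.card {v : ZMod (2 * k) //
        (cGraph (2 * k) (Sln k l)).connectedComponentMk v = c} = 2 * k / n) ∧
    (∃ lam ∈ ({l, k - l} : Set ℕ),
      Function.Injective
        (fun j : ZMod (2 * k / n) => (lam : ZMod (2 * k)) * (j.val : ZMod (2 * k))) ∧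
      Set.BijOn
        (fun s : Finset (ZMod (2 * k / n)) =>
          s.image (fun j => (lam : ZMod (2 * k)) * (j.val : ZMod (2 * k))))
        (A6 (2 * k / n))
        {s | s ∈ Sln k l ∧ ∀ v ∈ s, (cGraph (2 * k) (Sln k l)).Reachable v 0}) ∧
    (∀ c : (cGraph (2 * k) (Sln k l)).ConnectedComponent,
      ∃ f : ZMod (2 * k / n) → ZMod (2 * k), Function.Injective f ∧
        Set.BijOn (fun s : Finset (ZMod (2 * k / n)) => s.image f)
          (A6 (2 * k / n))
          {s | s ∈ Sln k l ∧
            ∀ v ∈ s, (cGraph (2 * k) (Sln k l)).connectedComponentMk v = c}) :=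
  stmt_12_general k l n (by lia) (by lia) hn
end
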